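/- Let C be a Barr-exact category, that is: C has finite limits, coequalisers of kernel pairs, regular epimorphisms are stable under pullback, and every equivalence relation in C is effective (is the kernel pair of some morphism). Then every split monomorphism in C is coextensive if and only if every morphism in C is coextensive. -/

import Mathlib

open CategoryTheory CategoryTheory.Limits

universe v u

variable {C : Type u} [Category.{v} C]

/-- `i₁ : X₁ ⟶ X` and `i₂ : X₂ ⟶ X` form a binary coproduct diagram. -/
def IsCoprodDiagram {X₁ X₂ X : C} (i₁ : X₁ ⟶ X) (i₂ : X₂ ⟶ X) : Prop :=
  Nonempty (IsColimit (BinaryCofan.mk i₁ i₂))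

/-- `p₁ : X ⟶ X₁` and `p₂ : X ⟶ X₂` form a binary product diagram. -/
def IsProdDiagram {X X₁ X₂ : C} (p₁ : X ⟶ X₁) (p₂ : X ⟶ X₂) : Prop :=
  Nonempty (IsLimit (BinaryFan.mk p₁ p₂))

/-- Condition (E1): pullbacks of `f` along both inclusions of any binary coproduct diagram
exist and the resulting legs form a binary coproduct diagram. -/
def SatE1 {A X : C} (f : A ⟶ X) : Prop :=
  ∀ {X₁ X₂ : C} (x₁ : X₁ ⟶ X) (x₂ : X₂ ⟶ X), IsCoprodDiagram x₁ x₂ →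
    ∃ (A₁ A₂ : C) (a₁ : A₁ ⟶ A) (a₂ : A₂ ⟶ A) (f₁ : A₁ ⟶ X₁) (f₂ : A₂ ⟶ X₂),
      IsPullback a₁ f₁ f x₁ ∧ IsPullback a₂ f₂ f x₂ ∧ IsCoprodDiagram a₁ a₂

/-- Condition (E2): in any commutative diagram over `f` whose rows are binary coproduct
diagrams, both squares are pullbacks. -/
def SatE2 {A X : C} (f : A ⟶ X) : Prop :=
  ∀ {A₁ A₂ X₁ X₂ : C} (a₁ : A₁ ⟶ A) (a₂ : A₂ ⟶ A) (x₁ : X₁ ⟶ X) (x₂ : X₂ ⟶ X)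
    (f₁ : A₁ ⟶ X₁) (f₂ : A₂ ⟶ X₂),
    a₁ ≫ f = f₁ ≫ x₁ → a₂ ≫ f = f₂ ≫ x₂ →
    IsCoprodDiagram x₁ x₂ → IsCoprodDiagram a₁ a₂ →
    IsPullback a₁ f₁ f x₁ ∧ IsPullback a₂ f₂ f x₂

/-- A morphism is extensive if it satisfies (E1) and (E2). -/
def Extensive {A X : C} (f : A ⟶ X) : Prop := SatE1 f ∧ SatE2 f

/-- Condition (C1): pushouts of `f` along both projections of any binary product diagram
exist and the resulting legs form a binary product diagram. -/
def SatC1 {A X : C} (f : A ⟶ X) : Prop :=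
  ∀ {A₁ A₂ : C} (p₁ : A ⟶ A₁) (p₂ : A ⟶ A₂), IsProdDiagram p₁ p₂ →
    ∃ (X₁ X₂ : C) (q₁ : X ⟶ X₁) (q₂ : X ⟶ X₂) (f₁ : A₁ ⟶ X₁) (f₂ : A₂ ⟶ X₂),
      IsPushout p₁ f f₁ q₁ ∧ IsPushout p₂ f f₂ q₂ ∧ IsProdDiagram q₁ q₂

/-- Condition (C2): in any commutative diagram over `f` whose rows are binary product
diagrams, both squares are pushouts. -/
def SatC2 {A X : C} (f : A ⟶ X) : Prop :=
  ∀ {A₁ A₂ X₁ X₂ : C} (p₁ : A ⟶ A₁) (p₂ : A ⟶ A₂) (q₁ : X ⟶ X₁) (q₂ : X ⟶ X₂)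
    (f₁ : A₁ ⟶ X₁) (f₂ : A₂ ⟶ X₂),
    p₁ ≫ f₁ = f ≫ q₁ → p₂ ≫ f₂ = f ≫ q₂ →
    IsProdDiagram p₁ p₂ → IsProdDiagram q₁ q₂ →
    IsPushout p₁ f f₁ q₁ ∧ IsPushout p₂ f f₂ q₂

/-- A morphism is coextensive if it satisfies (C1) and (C2). -/
def Coextensive {A X : C} (f : A ⟶ X) : Prop := SatC1 f ∧ SatC2 f

/-- A coproduct inclusion: a morphism admitting a complementary inclusion forming
a binary coproduct diagram. -/
def IsCoprodInclusion {A X : C} (ι : A ⟶ X) : Prop :=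
  ∃ (A' : C) (ι' : A' ⟶ X), IsCoprodDiagram ι ι'

/-- An extremal epimorphism: whenever `e = i ≫ m` with `m` a monomorphism, `m` is an
isomorphism. -/
def IsExtremalEpi {A B : C} (e : A ⟶ B) : Prop :=
  ∀ {I : C} (i : A ⟶ I) (m : I ⟶ B), Mono m → i ≫ m = e → IsIso m

/-- The binary strict refinement property for an object `X`. -/
def BinaryStrictRefinement (X : C) : Prop :=
  ∀ {A₁ A₂ B₁ B₂ : C} (a₁ : X ⟶ A₁) (a₂ : X ⟶ A₂) (b₁ : X ⟶ B₁) (b₂ : X ⟶ B₂),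
    IsProdDiagram a₁ a₂ → IsProdDiagram b₁ b₂ →
    ∃ (C₁₁ C₁₂ C₂₁ C₂₂ : C)
      (α₁₁ : A₁ ⟶ C₁₁) (α₁₂ : A₁ ⟶ C₁₂) (α₂₁ : A₂ ⟶ C₂₁) (α₂₂ : A₂ ⟶ C₂₂)
      (β₁₁ : B₁ ⟶ C₁₁) (β₁₂ : B₂ ⟶ C₁₂) (β₂₁ : B₁ ⟶ C₂₁) (β₂₂ : B₂ ⟶ C₂₂),
      a₁ ≫ α₁₁ = b₁ ≫ β₁₁ ∧ a₁ ≫ α₁₂ = b₂ ≫ β₁₂ ∧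
      a₂ ≫ α₂₁ = b₁ ≫ β₂₁ ∧ a₂ ≫ α₂₂ = b₂ ≫ β₂₂ ∧
      IsProdDiagram α₁₁ α₁₂ ∧ IsProdDiagram α₂₁ α₂₂ ∧
      IsProdDiagram β₁₁ β₂₁ ∧ IsProdDiagram β₁₂ β₂₂

/-- A jointly monomorphic pair which is a reflexive, symmetric and transitive relation. -/
def IsEquivalenceRelationPair {R X : C} (r₁ r₂ : R ⟶ X) : Prop :=
  (∀ {T : C} (a b : T ⟶ R), a ≫ r₁ = b ≫ r₁ → a ≫ r₂ = b ≫ r₂ → a = b) ∧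
  (∃ d : X ⟶ R, d ≫ r₁ = 𝟙 X ∧ d ≫ r₂ = 𝟙 X) ∧
  (∃ s : R ⟶ R, s ≫ r₁ = r₂ ∧ s ≫ r₂ = r₁) ∧
  (∀ {P : C} (p₁ p₂ : P ⟶ R), IsPullback p₁ p₂ r₂ r₁ →
    ∃ t : P ⟶ R, t ≫ r₁ = p₁ ≫ r₁ ∧ t ≫ r₂ = p₂ ≫ r₂)

namespace IsProdDiagram

lemma hom_ext {X X₁ X₂ T : C} {p₁ : X ⟶ X₁} {p₂ : X ⟶ X₂} (h : IsProdDiagram p₁ p₂)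
    {a b : T ⟶ X} (h₁ : a ≫ p₁ = b ≫ p₁) (h₂ : a ≫ p₂ = b ≫ p₂) : a = b :=
  BinaryFan.IsLimit.hom_ext h.some h₁ h₂

lemma exists_lift {X X₁ X₂ T : C} {p₁ : X ⟶ X₁} {p₂ : X ⟶ X₂} (h : IsProdDiagram p₁ p₂)
    (a : T ⟶ X₁) (b : T ⟶ X₂) : ∃ l : T ⟶ X, l ≫ p₁ = a ∧ l ≫ p₂ = b :=
  let l := BinaryFan.IsLimit.lift' h.some a b
  ⟨l.1, l.2.1, l.2.2⟩

lemma of_exists_lift {X X₁ X₂ : C} {p₁ : X ⟶ X₁} {p₂ : X ⟶ X₂}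
    (hext : ∀ {T : C} (a b : T ⟶ X), a ≫ p₁ = b ≫ p₁ → a ≫ p₂ = b ≫ p₂ → a = b)
    (hlift : ∀ {T : C} (a : T ⟶ X₁) (b : T ⟶ X₂), ∃ l : T ⟶ X, l ≫ p₁ = a ∧ l ≫ p₂ = b) :
    IsProdDiagram p₁ p₂ :=
  ⟨BinaryFan.isLimitMk (fun s => (hlift s.fst s.snd).choose)
    (fun s => (hlift s.fst s.snd).choose_spec.1) (fun s => (hlift s.fst s.snd).choose_spec.2)
    (fun s _ h₁ h₂ => hext _ _ (h₁.trans (hlift s.fst s.snd).choose_spec.1.symm)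
      (h₂.trans (hlift s.fst s.snd).choose_spec.2.symm))⟩

lemma swap {X X₁ X₂ : C} {p₁ : X ⟶ X₁} {p₂ : X ⟶ X₂} (h : IsProdDiagram p₁ p₂) :
    IsProdDiagram p₂ p₁ :=
  of_exists_lift (fun _ _ h₁ h₂ => h.hom_ext h₂ h₁) fun a b => by
    obtain ⟨l, h₁, h₂⟩ := h.exists_lift b a
    exact ⟨l, h₂, h₁⟩

lemma prod (X Y : C) [HasBinaryProduct X Y] :
    IsProdDiagram (prod.fst : X ⨯ Y ⟶ X) (prod.snd : X ⨯ Y ⟶ Y) :=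
  ⟨prodIsProd X Y⟩

lemma iso_comp {X Y X₁ X₂ : C} {p₁ : X ⟶ X₁} {p₂ : X ⟶ X₂} (h : IsProdDiagram p₁ p₂)
    (e : Y ≅ X) : IsProdDiagram (e.hom ≫ p₁) (e.hom ≫ p₂) :=
  of_exists_lift
    (fun a b h₁ h₂ => by
      rw [← cancel_mono e.hom]
      exact h.hom_ext (by simpa using h₁) (by simpa using h₂))
    fun a b => by
      obtain ⟨l, h₁, h₂⟩ := h.exists_lift a b
      exact ⟨l ≫ e.inv, by simpa using h₁, by simpa using h₂⟩

/-- A product of morphisms, one of which is an identity, is a base change of the other one. -/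
lemma isPullback {X Y X₁ Y₁ Z : C} {p₁ : X ⟶ X₁} {p₂ : X ⟶ Z} {q₁ : Y ⟶ Y₁} {q₂ : Y ⟶ Z}
    (hp : IsProdDiagram p₁ p₂) (hq : IsProdDiagram q₁ q₂) {f : X ⟶ Y} {g : X₁ ⟶ Y₁}
    (h₁ : f ≫ q₁ = p₁ ≫ g) (h₂ : f ≫ q₂ = p₂) : IsPullback f p₁ q₁ g := by
  have key : ∀ {T : C} (a : T ⟶ Y) (b : T ⟶ X₁), a ≫ q₁ = b ≫ g →
      ∃ l : T ⟶ X, l ≫ f = a ∧ l ≫ p₁ = b := fun a b w => by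
    obtain ⟨l, hl₁, hl₂⟩ := hp.exists_lift b (a ≫ q₂)
    refine ⟨l, hq.hom_ext ?_ ?_, hl₁⟩
    · rw [Category.assoc, h₁, reassoc_of% hl₁, w]
    · rw [Category.assoc, h₂, hl₂]
  refine ⟨⟨h₁⟩, ⟨PullbackCone.IsLimit.mk h₁ (fun s => (key s.fst s.snd s.condition).choose)
    (fun s => (key s.fst s.snd s.condition).choose_spec.1)
    (fun s => (key s.fst s.snd s.condition).choose_spec.2) fun s m hm₁ hm₂ => ?_⟩⟩
  obtain ⟨e₁, e₂⟩ := (key s.fst s.snd s.condition).choose_spec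
  refine hp.hom_ext (hm₂.trans e₂.symm) ?_
  rw [← h₂, reassoc_of% hm₁, reassoc_of% e₁]

end IsProdDiagram

lemma SatC1.comp {A X Y : C} {f : A ⟶ X} {g : X ⟶ Y} (hf : SatC1 f) (hg : SatC1 g) :
    SatC1 (f ≫ g) := fun p₁ p₂ hp => by
  obtain ⟨X₁, X₂, q₁, q₂, f₁, f₂, s₁, s₂, hq⟩ := hf p₁ p₂ hp
  obtain ⟨Y₁, Y₂, r₁, r₂, g₁, g₂, t₁, t₂, hr⟩ := hg q₁ q₂ hq
  exact ⟨Y₁, Y₂, r₁, r₂, f₁ ≫ g₁, f₂ ≫ g₂, s₁.paste_vert t₁, s₂.paste_vert t₂, hr⟩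

lemma SatC2.comp {A X Y : C} {f : A ⟶ X} {g : X ⟶ Y} (hf : SatC1 f) (hg : SatC2 g) :
    SatC2 (f ≫ g) := fun p₁ p₂ r₁ r₂ h₁ h₂ w₁ w₂ hp hr => by
  obtain ⟨X₁, X₂, q₁, q₂, f₁, f₂, s₁, s₂, hq⟩ := hf p₁ p₂ hp
  obtain ⟨t₁, t₂⟩ := hg q₁ q₂ r₁ r₂ (s₁.desc h₁ (g ≫ r₁) (by simpa using w₁))
    (s₂.desc h₂ (g ≫ r₂) (by simpa using w₂)) (by simp) (by simp) hq hr
  exact ⟨by simpa using s₁.paste_vert t₁, by simpa using s₂.paste_vert t₂⟩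

lemma Coextensive.comp {A X Y : C} {f : A ⟶ X} {g : X ⟶ Y} (hf : Coextensive f)
    (hg : Coextensive g) : Coextensive (f ≫ g) :=
  ⟨SatC1.comp hf.1 hg.1, SatC2.comp hf.1 hg.2⟩

/-- If identity morphisms satisfy (C2), then every subterminal object is terminal. -/
lemma isIso_terminal_from_of_satC2_id [HasTerminal C] {X : C} (hX : SatC2 (𝟙 X))
    (hsub : ∀ {T : C} (a b : T ⟶ X), a = b) : IsIso (terminal.from X) := by
  have h₁ : IsProdDiagram (𝟙 X) (𝟙 X) :=
    .of_exists_lift (fun _ _ _ _ => hsub _ _) fun a _ => ⟨a, hsub _ _, hsub _ _⟩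
  have h₂ : IsProdDiagram (𝟙 X) (terminal.from X) :=
    .of_exists_lift (fun _ _ _ _ => hsub _ _) fun a _ => ⟨a, hsub _ _, Subsingleton.elim _ _⟩
  have h := (hX (𝟙 X) (𝟙 X) (𝟙 X) (terminal.from X) (𝟙 X) (terminal.from X)
    (by simp) (by simp) h₁ h₂).2
  exact h.isIso_inl_of_isIso

section Regular

variable [Regular C]

lemma CategoryTheory.IsPullback.strongEpi_fst {P X Y Z : C} {fst : P ⟶ X} {snd : P ⟶ Y}
    {f : X ⟶ Z} {g : Y ⟶ Z} (h : IsPullback fst snd f g) [StrongEpi g] : StrongEpi fst := by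
  have : IsRegularEpi fst :=
    Regular.regularEpiIsStableUnderBaseChange.of_isPullback h.flip
      (show IsRegularEpi g from inferInstance)
  infer_instance

lemma strongEpi_terminal_from (hid : ∀ X : C, SatC2 (𝟙 X)) (X : C) :
    StrongEpi (terminal.from X) := by
  let F := Regular.strongEpiMonoFactorisation (terminal.from X)
  have : IsIso (terminal.from F.I) := isIso_terminal_from_of_satC2_id (hid _) fun a b => by
    rw [← cancel_mono F.m]
    exact Subsingleton.elim _ _
  rw [show terminal.from X = F.e ≫ terminal.from F.I from Subsingleton.elim _ _]
  exact strongEpi_comp _ _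

lemma IsProdDiagram.strongEpi_fst (hid : ∀ X : C, SatC2 (𝟙 X)) {X X₁ X₂ : C} {p₁ : X ⟶ X₁}
    {p₂ : X ⟶ X₂} (h : IsProdDiagram p₁ p₂) : StrongEpi p₁ := by
  have := strongEpi_terminal_from hid X₂
  have h' : IsProdDiagram (terminal.from X₁) (𝟙 X₁) :=
    .of_exists_lift (fun _ _ _ h => by simpa using h)
      fun _ b => ⟨b, Subsingleton.elim _ _, Category.comp_id b⟩
  exact (h.swap.isPullback h' (g := terminal.from X₂) (Subsingleton.elim _ _)
    (Category.comp_id _)).strongEpi_fst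

/-- In a regular category, strong epimorphisms are closed under binary products. -/
lemma IsProdDiagram.strongEpi_map {X X₁ X₂ Y Y₁ Y₂ : C} {p₁ : X ⟶ X₁} {p₂ : X ⟶ X₂}
    {q₁ : Y ⟶ Y₁} {q₂ : Y ⟶ Y₂} (hp : IsProdDiagram p₁ p₂) (hq : IsProdDiagram q₁ q₂)
    {f : X ⟶ Y} {f₁ : X₁ ⟶ Y₁} {f₂ : X₂ ⟶ Y₂} (h₁ : f ≫ q₁ = p₁ ≫ f₁) (h₂ : f ≫ q₂ = p₂ ≫ f₂)
    [StrongEpi f₁] [StrongEpi f₂] : StrongEpi f := by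
  obtain ⟨l, hl₁, hl₂⟩ := hq.exists_lift prod.fst ((prod.snd : Y₁ ⨯ X₂ ⟶ X₂) ≫ f₂)
  obtain ⟨k, hk₁, hk₂⟩ := (IsProdDiagram.prod Y₁ X₂).exists_lift (p₁ ≫ f₁) p₂
  have : StrongEpi k := (hp.isPullback (IsProdDiagram.prod Y₁ X₂) hk₁ hk₂).strongEpi_fst
  have : StrongEpi l := ((IsProdDiagram.prod Y₁ X₂).swap.isPullback hq.swap hl₂ hl₁).strongEpi_fst
  rw [show f = k ≫ l from
    hq.hom_ext (by simp [h₁, hl₁, hk₁]) (by simp [h₂, hl₂, reassoc_of% hk₂])]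
  exact strongEpi_comp _ _

lemma exists_desc_of_strongEpi {X Y T : C} (f : X ⟶ Y) [StrongEpi f] (u : X ⟶ T)
    (h : pullback.fst f f ≫ u = pullback.snd f f ≫ u) : ∃ w : Y ⟶ T, f ≫ w = u :=
  IsRegularEpi.exists_of_isKernelPair f (IsKernelPair.of_hasPullback f) u h

/-- A strong epimorphism compatible with binary products forms pushout squares with the
projections. -/
lemma IsProdDiagram.isPushout_of_strongEpi (hid : ∀ X : C, SatC2 (𝟙 X))
    {X X₁ X₂ Y Y₁ Y₂ : C} {p₁ : X ⟶ X₁} {p₂ : X ⟶ X₂} {q₁ : Y ⟶ Y₁} {q₂ : Y ⟶ Y₂}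
    (hp : IsProdDiagram p₁ p₂) (hq : IsProdDiagram q₁ q₂) {f : X ⟶ Y} {f₁ : X₁ ⟶ Y₁}
    {f₂ : X₂ ⟶ Y₂} (h₁ : p₁ ≫ f₁ = f ≫ q₁) (h₂ : p₂ ≫ f₂ = f ≫ q₂) [StrongEpi f] :
    IsPushout p₁ f f₁ q₁ := by
  have := hp.strongEpi_fst hid
  have := hq.strongEpi_fst hid
  have : StrongEpi (p₁ ≫ f₁) := h₁ ▸ strongEpi_comp f q₁
  have : StrongEpi f₁ := strongEpi_of_strongEpi p₁ f₁
  have key : ∀ {T : C} (u : X₁ ⟶ T) (v : Y ⟶ T), p₁ ≫ u = f ≫ v →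
      ∃ w : Y₁ ⟶ T, f₁ ≫ w = u ∧ q₁ ≫ w = v := fun u v huv => by
    have := (IsProdDiagram.prod (pullback f₁ f₁) X₂).strongEpi_fst hid
    obtain ⟨a, ha₁, ha₂⟩ := hp.exists_lift
      ((prod.fst : pullback f₁ f₁ ⨯ X₂ ⟶ _) ≫ pullback.fst f₁ f₁) prod.snd
    obtain ⟨b, hb₁, hb₂⟩ := hp.exists_lift
      ((prod.fst : pullback f₁ f₁ ⨯ X₂ ⟶ _) ≫ pullback.snd f₁ f₁) prod.snd
    have hab : a ≫ f = b ≫ f := hq.hom_ext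
      (by simp only [Category.assoc, ← h₁, reassoc_of% ha₁, reassoc_of% hb₁, pullback.condition])
      (by simp only [Category.assoc, ← h₂, reassoc_of% ha₂, reassoc_of% hb₂])
    obtain ⟨w, hw⟩ := exists_desc_of_strongEpi f₁ u (by
      rw [← cancel_epi (prod.fst : pullback f₁ f₁ ⨯ X₂ ⟶ _), ← reassoc_of% ha₁,
        ← reassoc_of% hb₁, huv, reassoc_of% hab])
    refine ⟨w, hw, ?_⟩
    rw [← cancel_epi f, ← reassoc_of% h₁, hw, huv]
  refine ⟨⟨h₁⟩, ⟨PushoutCocone.IsColimit.mk h₁ (fun s => (key s.inl s.inr s.condition).choose)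
    (fun s => (key s.inl s.inr s.condition).choose_spec.1)
    (fun s => (key s.inl s.inr s.condition).choose_spec.2) fun s m hm _ => ?_⟩⟩
  rw [← cancel_epi f₁, hm, (key s.inl s.inr s.condition).choose_spec.1]

/-- A family of pairs in a relation can be descended along strong epimorphisms. -/
lemma exists_factor_of_strongEpi {P Q R X : C} (e : P ⟶ Q) [StrongEpi e] {r₁ r₂ : R ⟶ X}
    (hr : ∀ {T : C} (a b : T ⟶ R), a ≫ r₁ = b ≫ r₁ → a ≫ r₂ = b ≫ r₂ → a = b)
    (x : P ⟶ R) (a b : Q ⟶ X) (ha : x ≫ r₁ = e ≫ a) (hb : x ≫ r₂ = e ≫ b) :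
    ∃ t : Q ⟶ R, t ≫ r₁ = a ∧ t ≫ r₂ = b := by
  have hX := IsProdDiagram.prod X X
  obtain ⟨m, hm₁, hm₂⟩ := hX.exists_lift r₁ r₂
  obtain ⟨c, hc₁, hc₂⟩ := hX.exists_lift a b
  have : Mono m := ⟨fun u v h =>
    hr u v (by rw [← hm₁, reassoc_of% h]) (by rw [← hm₂, reassoc_of% h])⟩
  have sq : CommSq x e m c :=
    ⟨hX.hom_ext (by simp [hm₁, hc₁, ha]) (by simp [hm₂, hc₂, hb])⟩
  exact ⟨sq.lift, by rw [← hm₁, sq.fac_right_assoc, hc₁], by rw [← hm₂, sq.fac_right_assoc, hc₂]⟩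

/-- If the kernel pair of `f` decomposes as a product of two reflexive relations, then the
first factor is an equivalence relation. -/
lemma IsProdDiagram.isEquivalenceRelationPair (hid : ∀ X : C, SatC2 (𝟙 X))
    {X X₁ X₂ K K₁ K₂ Y : C} {f : X ⟶ Y} {r s : K ⟶ X} (hK : IsPullback r s f f)
    {p₁ : X ⟶ X₁} {p₂ : X ⟶ X₂} {k₁ : K ⟶ K₁} {k₂ : K ⟶ K₂} (hp : IsProdDiagram p₁ p₂)
    (hk : IsProdDiagram k₁ k₂) {r₁ s₁ : K₁ ⟶ X₁} {r₂ s₂ : K₂ ⟶ X₂} {d₁ : X₁ ⟶ K₁} {d₂ : X₂ ⟶ K₂}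
    (hr₁ : k₁ ≫ r₁ = r ≫ p₁) (hs₁ : k₁ ≫ s₁ = s ≫ p₁)
    (hr₂ : k₂ ≫ r₂ = r ≫ p₂) (hs₂ : k₂ ≫ s₂ = s ≫ p₂)
    (hdr₁ : d₁ ≫ r₁ = 𝟙 X₁) (hds₁ : d₁ ≫ s₁ = 𝟙 X₁)
    (hdr₂ : d₂ ≫ r₂ = 𝟙 X₂) (hds₂ : d₂ ≫ s₂ = 𝟙 X₂) :
    IsEquivalenceRelationPair r₁ s₁ := by
  have hmono : ∀ {T : C} (a b : T ⟶ K₁), a ≫ r₁ = b ≫ r₁ → a ≫ s₁ = b ≫ s₁ → a = b :=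
    fun {T} a b har has => by
      have := (IsProdDiagram.prod T K₂).strongEpi_fst hid
      obtain ⟨a', ha₁, ha₂⟩ := hk.exists_lift ((prod.fst : T ⨯ K₂ ⟶ T) ≫ a) prod.snd
      obtain ⟨b', hb₁, hb₂⟩ := hk.exists_lift ((prod.fst : T ⨯ K₂ ⟶ T) ≫ b) prod.snd
      have hab : a' = b' := hK.hom_ext
        (hp.hom_ext
          (by simp only [Category.assoc, ← hr₁, reassoc_of% ha₁, reassoc_of% hb₁, har])
          (by simp only [Category.assoc, ← hr₂, reassoc_of% ha₂, reassoc_of% hb₂]))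
        (hp.hom_ext
          (by simp only [Category.assoc, ← hs₁, reassoc_of% ha₁, reassoc_of% hb₁, has])
          (by simp only [Category.assoc, ← hs₂, reassoc_of% ha₂, reassoc_of% hb₂]))
      rw [← cancel_epi (prod.fst : T ⨯ K₂ ⟶ T), ← ha₁, ← hb₁, hab]
  refine ⟨hmono, ⟨d₁, hdr₁, hds₁⟩, ?_, fun {P} a b hP => ?_⟩
  · have := hk.strongEpi_fst hid
    exact exists_factor_of_strongEpi k₁ hmono (hK.lift s r hK.w.symm ≫ k₁) s₁ r₁
      (by simp [hr₁, hs₁]) (by simp [hr₁, hs₁])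
  · have := (IsProdDiagram.prod P X₂).strongEpi_fst hid
    obtain ⟨x, hx₁, hx₂⟩ := hk.exists_lift ((prod.fst : P ⨯ X₂ ⟶ P) ≫ a) (prod.snd ≫ d₂)
    obtain ⟨y, hy₁, hy₂⟩ := hk.exists_lift ((prod.fst : P ⨯ X₂ ⟶ P) ≫ b) (prod.snd ≫ d₂)
    have hxy : x ≫ s = y ≫ r := hp.hom_ext
      (by simp only [Category.assoc, ← hr₁, ← hs₁, reassoc_of% hx₁, reassoc_of% hy₁, hP.w])
      (by simp only [Category.assoc, ← hr₂, ← hs₂, reassoc_of% hx₂, reassoc_of% hy₂, hdr₂, hds₂])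
    refine exists_factor_of_strongEpi (prod.fst : P ⨯ X₂ ⟶ P) hmono
      (hK.lift (x ≫ r) (y ≫ s) ?_ ≫ k₁) _ _ ?_ ?_
    · rw [Category.assoc, hK.w, reassoc_of% hxy, Category.assoc, hK.w]
    · rw [Category.assoc, hr₁, hK.lift_fst_assoc, Category.assoc, ← hr₁, reassoc_of% hx₁]
    · rw [Category.assoc, hs₁, hK.lift_snd_assoc, Category.assoc, ← hs₁, reassoc_of% hy₁]

/-- An effective equivalence relation in a regular category is the kernel pair of a strong
epimorphism. -/
lemma exists_strongEpi_isKernelPair {R X Y : C} {r₁ r₂ : R ⟶ X} {f : X ⟶ Y}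
    (h : IsPullback r₁ r₂ f f) :
    ∃ (Z : C) (g : X ⟶ Z), StrongEpi g ∧ IsPullback r₁ r₂ g g := by
  have : HasCoequalizer r₁ r₂ := Regular.hasCoequalizer_of_isKernelPair (f := f) h
  refine ⟨_, coequalizer.π r₁ r₂, inferInstance, ?_⟩
  exact IsKernelPair.cancel_right (f₂ := coequalizer.desc f h.w) (coequalizer.condition r₁ r₂)
    (by simpa [IsKernelPair] using h)

lemma satC1_of_strongEpi (hid : ∀ X : C, SatC2 (𝟙 X))
    (heff : ∀ {R X : C} (r₁ r₂ : R ⟶ X), IsEquivalenceRelationPair r₁ r₂ →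
      ∃ (Y : C) (f : X ⟶ Y), IsPullback r₁ r₂ f f)
    (hsplit : ∀ {A B : C} (m : A ⟶ B), IsSplitMono m → SatC1 m)
    {X Y : C} (f : X ⟶ Y) [StrongEpi f] : SatC1 f := fun {X₁ X₂} p₁ p₂ hp => by
  have hK := IsPullback.of_hasPullback f f
  obtain ⟨K₁, K₂, k₁, k₂, d₁, d₂, hk₁, hk₂, hk⟩ :=
    hsplit (pullback.diagonal f) inferInstance p₁ p₂ hp
  obtain ⟨r₁, hdr₁, hr₁⟩ := hk₁.exists_desc (𝟙 X₁) (pullback.fst f f ≫ p₁) (by simp)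
  obtain ⟨s₁, hds₁, hs₁⟩ := hk₁.exists_desc (𝟙 X₁) (pullback.snd f f ≫ p₁) (by simp)
  obtain ⟨r₂, hdr₂, hr₂⟩ := hk₂.exists_desc (𝟙 X₂) (pullback.fst f f ≫ p₂) (by simp)
  obtain ⟨s₂, hds₂, hs₂⟩ := hk₂.exists_desc (𝟙 X₂) (pullback.snd f f ≫ p₂) (by simp)
  obtain ⟨_, _, hg₁⟩ := heff r₁ s₁
    (hp.isEquivalenceRelationPair hid hK hk hr₁ hs₁ hr₂ hs₂ hdr₁ hds₁ hdr₂ hds₂)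
  obtain ⟨_, _, hg₂⟩ := heff r₂ s₂
    (hp.swap.isEquivalenceRelationPair hid hK hk.swap hr₂ hs₂ hr₁ hs₁ hdr₂ hds₂ hdr₁ hds₁)
  obtain ⟨Y₁, g₁, _, hg₁⟩ := exists_strongEpi_isKernelPair hg₁
  obtain ⟨Y₂, g₂, _, hg₂⟩ := exists_strongEpi_isKernelPair hg₂
  have hY := IsProdDiagram.prod Y₁ Y₂
  obtain ⟨h, hh₁, hh₂⟩ := hY.exists_lift (p₁ ≫ g₁) (p₂ ≫ g₂)
  have : StrongEpi h := hp.strongEpi_map hY hh₁ hh₂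
  obtain ⟨φ, hφ⟩ := exists_desc_of_strongEpi f h (hY.hom_ext
    (by simp only [Category.assoc, hh₁, ← reassoc_of% hr₁, ← reassoc_of% hs₁, hg₁.w])
    (by simp only [Category.assoc, hh₂, ← reassoc_of% hr₂, ← reassoc_of% hs₂, hg₂.w]))
  obtain ⟨ψ, hψ⟩ := exists_desc_of_strongEpi h f (by
    have w₁ : pullback.fst h h ≫ p₁ ≫ g₁ = pullback.snd h h ≫ p₁ ≫ g₁ := by
      rw [← hh₁, pullback.condition_assoc]
    have w₂ : pullback.fst h h ≫ p₂ ≫ g₂ = pullback.snd h h ≫ p₂ ≫ g₂ := by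
      rw [← hh₂, pullback.condition_assoc]
    obtain ⟨m, hm₁, hm₂⟩ := hk.exists_lift
      (hg₁.lift (pullback.fst h h ≫ p₁) (pullback.snd h h ≫ p₁) (by simpa using w₁))
      (hg₂.lift (pullback.fst h h ≫ p₂) (pullback.snd h h ≫ p₂) (by simpa using w₂))
    have e₁ : m ≫ pullback.fst f f = pullback.fst h h := hp.hom_ext
      (by rw [Category.assoc, ← hr₁, reassoc_of% hm₁, hg₁.lift_fst])
      (by rw [Category.assoc, ← hr₂, reassoc_of% hm₂, hg₂.lift_fst])
    have e₂ : m ≫ pullback.snd f f = pullback.snd h h := hp.hom_ext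
      (by rw [Category.assoc, ← hs₁, reassoc_of% hm₁, hg₁.lift_snd])
      (by rw [Category.assoc, ← hs₂, reassoc_of% hm₂, hg₂.lift_snd])
    rw [← e₁, ← e₂, Category.assoc, Category.assoc, pullback.condition])
  let e : Y ≅ Y₁ ⨯ Y₂ :=
    ⟨φ, ψ, by rw [← cancel_epi f, reassoc_of% hφ, hψ, Category.comp_id],
      by rw [← cancel_epi h, reassoc_of% hψ, hφ, Category.comp_id]⟩
  have hq := (IsProdDiagram.prod Y₁ Y₂).iso_comp e
  have h₁ : p₁ ≫ g₁ = f ≫ e.hom ≫ prod.fst := by rw [reassoc_of% hφ, hh₁]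
  have h₂ : p₂ ≫ g₂ = f ≫ e.hom ≫ prod.snd := by rw [reassoc_of% hφ, hh₂]
  exact ⟨Y₁, Y₂, _, _, g₁, g₂, hp.isPushout_of_strongEpi hid hq h₁ h₂,
    hp.swap.isPushout_of_strongEpi hid hq.swap h₂ h₁, hq⟩

lemma satC2_of_strongEpi (hid : ∀ X : C, SatC2 (𝟙 X)) {X Y : C} (f : X ⟶ Y) [StrongEpi f] :
    SatC2 f := fun _ _ _ _ _ _ h₁ h₂ hp hq =>
  ⟨hp.isPushout_of_strongEpi hid hq h₁ h₂, hp.swap.isPushout_of_strongEpi hid hq.swap h₂ h₁⟩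

end Regular

/-- In a Barr-exact category, every split monomorphism is coextensive iff every
morphism is coextensive. -/
theorem barrExact_splitMono_coextensive_iff_coextensive [HasFiniteLimits C]
    (hcoeq : ∀ {R X Y : C} (a b : R ⟶ X) (f : X ⟶ Y), IsPullback a b f f →
      HasCoequalizer a b)
    (hstable : ∀ {P X Y Z : C} (fst : P ⟶ X) (snd : P ⟶ Y) (f : X ⟶ Z) (g : Y ⟶ Z),
      IsPullback fst snd f g → Nonempty (RegularEpi g) → Nonempty (RegularEpi fst))
    (heff : ∀ {R X : C} (r₁ r₂ : R ⟶ X), IsEquivalenceRelationPair r₁ r₂ →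
      ∃ (Y : C) (f : X ⟶ Y), IsPullback r₁ r₂ f f) :
    (∀ {A B : C} (m : A ⟶ B), IsSplitMono m → Coextensive m) ↔
      (∀ {A B : C} (f : A ⟶ B), Coextensive f) := by
  refine ⟨fun hsplit A B f => ?_, fun h A B m _ => h m⟩
  have : Regular C :=
    { hasCoequalizer_of_isKernelPair := fun h => hcoeq _ _ _ h
      regularEpiIsStableUnderBaseChange :=
        { of_isPullback := fun sq hg => ⟨hstable _ _ _ _ sq.flip hg.1⟩ } }
  have hid (X : C) : SatC2 (𝟙 X) := (hsplit (𝟙 X) inferInstance).2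
  have : StrongEpi (prod.snd : A ⨯ B ⟶ B) := (IsProdDiagram.prod A B).swap.strongEpi_fst hid
  rw [← prod.lift_snd (𝟙 A) f]
  exact (hsplit _ (.mk' ⟨prod.fst, prod.lift_fst _ _⟩)).comp
    ⟨satC1_of_strongEpi hid heff (fun m hm => (hsplit m hm).1) _, satC2_of_strongEpi hid _⟩
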